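/- Let p ∈ (1,n), a ≥ n, and θ = (a−p)/(p(a−n)+n−p). Let A ∈ SGL_{n,+} be the block matrix determined by λ > 0, a⃗ ∈ ℝ^{n−1}, B ∈ GL_{n−1}, acting by A(t,x) = (λt, a⃗ t + Bx), and set g(t,x) = f(A(t,x)). Then the affine energy satisfies 𝒜_p(g) = |det B|^{−(a−p)/(p(a−1))} λ^{(p−1)(a−n)/(p(a−1))} 𝒜_p(f), and the boundary norm satisfies ∫_{∂ℝ^n_+} |g(0,x)|^{p(a−1)/(a−p)} dx = |det B|^{−1} ∫_{∂ℝ^n_+} |f(0,x)|^{p(a−1)/(a−p)} dx. -/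

import Mathlib

open MeasureTheory Real

/-- `ω_s = π^{s/2}/Γ(1+s/2)`. -/
noncomputable def omegaBall (s : ℝ) : ℝ := π ^ (s / 2) / Real.Gamma (1 + s / 2)

/-- The constant `c_{n,p}`. -/
noncomputable def cNP (n : ℕ) (p : ℝ) : ℝ :=
  ((n : ℝ) * omegaBall n) ^ (1 / (n : ℝ)) *
    (((n : ℝ) * omegaBall n * omegaBall (p - 1)) / (2 * omegaBall ((n : ℝ) + p - 2))) ^ (1 / p)

/-- The constant `c_{n,p,a}`. -/
noncomputable def cNPA (n : ℕ) (p a : ℝ) : ℝ :=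
  ((p * (a - 1) / ((p - 1) * ((n : ℝ) - 1))) *
    (((p - 1) * ((n : ℝ) - 1)) / (p * (a - (n : ℝ)) + (n : ℝ) - 1)) ^
      (1 / p + (p - 1) * (a - (n : ℝ)) / (p * (a - 1)))) ^ (1 / p)

/-- The upper half space as a subset of `ℝ × ℝ^{n-1}`. -/
def upperHalfP (n : ℕ) : Set (ℝ × EuclideanSpace ℝ (Fin (n - 1))) := {z | 0 ≤ z.1}

/-- The affine energy `ℰ_p(f)`. -/
noncomputable def affE (n : ℕ) (p : ℝ) (f : ℝ × EuclideanSpace ℝ (Fin (n - 1)) → ℝ) : ℝ :=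
  cNP (n - 1) p *
    (∫ ξ in Metric.sphere (0 : EuclideanSpace ℝ (Fin (n - 1))) 1,
        (∫ z in upperHalfP n, |fderiv ℝ f z (0, ξ)| ^ p) ^ (-(((n : ℝ) - 1) / p))
      ∂(μH[(n : ℝ) - 2])) ^ (-(1 / ((n : ℝ) - 1)))

/-- The ${\rm SGL}_{n,+}$-invariant quantity `𝒜_p(f)`, defined through its `p`-th power. -/
noncomputable def affA (n : ℕ) (p a : ℝ) (f : ℝ × EuclideanSpace ℝ (Fin (n - 1)) → ℝ) : ℝ :=
  (cNPA n p a ^ p * affE n p f ^ (p - 1 - (p - 1) * (a - (n : ℝ)) / (a - 1)) *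
    (⨅ v : EuclideanSpace ℝ (Fin (n - 1)),
      (∫ z in upperHalfP n, |fderiv ℝ f z (1, v)| ^ p) ^
        ((1 / p) * (1 + (p - 1) * (a - (n : ℝ)) / (a - 1))))) ^ (1 / p)

lemma aux_cover {E : Type*} [NormedAddCommGroup E] [InnerProductSpace ℝ E]
    [FiniteDimensional ℝ E] (v : E) (hv : ‖v‖ = 1) (x : E) (hx : ‖x‖ = 1) (hvx : inner ℝ v x ≤ 0) :
    ∃ w ∈ Metric.closedBall (0 : (ℝ ∙ v)ᗮ) 2, stereoInvFunAux v (w : E) = x := by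
  have hxs : x ∈ Metric.sphere (0 : E) 1 := by simp [hx]
  refine ⟨stereoToFun v x, ?_, ?_⟩
  · rw [mem_closedBall_zero_iff, stereoToFun, norm_smul]
    have h1 : ‖(ℝ ∙ v)ᗮ.orthogonalProjectionOnto x‖ ≤ 1 := by
      have := (ℝ ∙ v)ᗮ.norm_orthogonalProjectionOnto_apply_le x
      rwa [hx] at this
    have h2 : ‖(2 / ((1 : ℝ) - innerSL ℝ v x))‖ ≤ 2 := by
      rw [innerSL_apply_apply, Real.norm_eq_abs, abs_of_nonneg (div_nonneg (by norm_num) (by linarith))]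
      rw [div_le_iff₀ (by linarith)]
      linarith
    have h3 := mul_le_mul h2 h1 (norm_nonneg _) (by norm_num)
    linarith
  · have := stereo_left_inv hv (x := ⟨x, hxs⟩) (by
      intro h
      have h' : x = v := h
      rw [h', real_inner_self_eq_norm_sq, hv] at hvx
      norm_num at hvx)
    exact congrArg Subtype.val this

lemma aux_finite_image {E : Type*} [NormedAddCommGroup E] [InnerProductSpace ℝ E]
    [FiniteDimensional ℝ E] [MeasurableSpace E] [BorelSpace E] (m : ℕ)
    (hE : Module.finrank ℝ E = m + 1) (v : E) (hv : ‖v‖ = 1) :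
    μH[(m : ℝ)] ((fun w : (ℝ ∙ v)ᗮ => stereoInvFunAux v (w : E)) '' Metric.closedBall 0 2) < ⊤ := by
  have hfr : Module.finrank ℝ (ℝ ∙ v)ᗮ = m := by
    have : Fact (Module.finrank ℝ E = m + 1) := ⟨hE⟩
    exact Submodule.finrank_orthogonal_span_singleton (by
      intro h; simp [h] at hv)
  have hc : ContDiff ℝ 1 (fun w : (ℝ ∙ v)ᗮ => stereoInvFunAux v (w : E)) :=
    contDiff_stereoInvFunAux.comp ((ℝ ∙ v)ᗮ.subtypeL.contDiff)
  obtain ⟨K, hK⟩ := hc.contDiffOn.exists_lipschitzOnWith one_ne_zero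
    (convex_closedBall (0 : (ℝ ∙ v)ᗮ) 2) (isCompact_closedBall _ _)
  refine (hK.hausdorffMeasure_image_le (Nat.cast_nonneg m)).trans_lt ?_
  refine ENNReal.mul_lt_top (by simp) ?_
  have : IsFiniteMeasureOnCompacts (μH[(m : ℝ)] : Measure (ℝ ∙ v)ᗮ) := by
    have h : Measure.IsAddHaarMeasure (μH[(Module.finrank ℝ (ℝ ∙ v)ᗮ : ℝ)] : Measure (ℝ ∙ v)ᗮ) :=
      inferInstance
    rw [hfr] at h
    infer_instance
  exact (isCompact_closedBall _ _).measure_lt_top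

lemma aux_sphere_finite {E : Type*} [NormedAddCommGroup E] [InnerProductSpace ℝ E]
    [FiniteDimensional ℝ E] [MeasurableSpace E] [BorelSpace E] (m : ℕ)
    (hE : Module.finrank ℝ E = m + 1) :
    μH[(m : ℝ)] (Metric.sphere (0 : E) 1) < ⊤ := by
  have : Nontrivial E := Module.nontrivial_of_finrank_pos (R := ℝ) (by omega)
  obtain ⟨v, hv⟩ := exists_norm_eq E zero_le_one
  have hv' : ‖-v‖ = 1 := by rwa [norm_neg]
  refine lt_of_le_of_lt (measure_mono (t := _ ∪ _) ?_)
    (measure_union_lt_top (aux_finite_image m hE v hv) (aux_finite_image m hE (-v) hv'))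
  intro x hx
  have hx1 : ‖x‖ = 1 := by simpa using hx
  rcases le_total (inner ℝ v x) 0 with h | h
  · left
    exact aux_cover v hv x hx1 h
  · right
    exact aux_cover (-v) hv' x hx1 (by rw [inner_neg_left]; linarith)

lemma aux_unique {E : Type*} [NormedAddCommGroup E] [InnerProductSpace ℝ E]
    [FiniteDimensional ℝ E] [MeasurableSpace E] [BorelSpace E] [Nontrivial E] :
    ∃ κ : Set E → ENNReal, ∀ (μ : Measure E) [IsFiniteMeasure μ], 
      μ (Metric.sphere (0 : E) 1)ᶜ = 0 → 
      (∀ e : E ≃ₗᵢ[ℝ] E, MeasurePreserving e μ μ) → 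
      ∀ A, MeasurableSet A → μ A = κ A * μ Set.univ := by
  let G := unitary (E →L[ℝ] E)
  let : MeasurableSpace G := borel G
  have : BorelSpace G := ⟨rfl⟩
  have : CompactSpace G := by
    refine isCompact_iff_compactSpace.mp (Metric.isCompact_of_isClosed_isBounded isClosed_unitary ?_)
    refine (Metric.isBounded_closedBall (x := (0 : E →L[ℝ] E)) (r := 1)).subset ?_
    intro g hg
    rw [mem_closedBall_zero_iff]
    refine ContinuousLinearMap.opNorm_le_bound _ zero_le_one fun x => ?_
    have := (Unitary.linearIsometryEquiv ⟨g, hg⟩).norm_map x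
    have h2 : ‖g x‖ = ‖x‖ := this
    rw [h2, one_mul]
  let ν : Measure G := (Measure.haar (G := G)).inv
  have : IsFiniteMeasure ν := by
    constructor
    simp only [ν]
    exact measure_lt_top _ _
  have hν0 : ν Set.univ ≠ 0 := by
    have h : (Measure.haar (G := G)).inv Set.univ = Measure.haar (G := G) (Set.univ)⁻¹ :=
      Measure.inv_apply _ _
    rw [Set.inv_univ] at h
    change (Measure.haar (G := G)).inv Set.univ ≠ 0
    rw [h]
    exact isOpen_univ.measure_ne_zero _ Set.univ_nonempty
  obtain ⟨e₀, he₀⟩ := exists_norm_eq E zero_le_one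
  have hcont : Continuous (fun q : G × E => (q.1 : E →L[ℝ] E) q.2) := by fun_prop
  refine ⟨fun A => (ν Set.univ)⁻¹ * ν {g : G | (g : E →L[ℝ] E) e₀ ∈ A}, ?_⟩
  intro μ _ hμ hinv A hA
  have key : ν Set.univ * μ A = ν {g : G | (g : E →L[ℝ] E) e₀ ∈ A} * μ Set.univ := by
    have hmeas : MeasurableSet {q : G × E | (q.1 : E →L[ℝ] E) q.2 ∈ A} :=
      hcont.measurable hA
    have h1 : (ν.prod μ) {q : G × E | (q.1 : E →L[ℝ] E) q.2 ∈ A} = ν Set.univ * μ A := by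
      rw [Measure.prod_apply hmeas]
      have : ∀ g : G, μ (Prod.mk g ⁻¹' {q : G × E | (q.1 : E →L[ℝ] E) q.2 ∈ A}) = μ A := by
        intro g
        rw [← (hinv (Unitary.linearIsometryEquiv g)).measure_preimage hA.nullMeasurableSet]
        rfl
      simp_rw [this]
      simp [mul_comm]
    rw [← h1, Measure.prod_apply_symm hmeas]
    have h2 : ∀ᵐ x ∂μ, ν ((fun g => (g, x)) ⁻¹' {q : G × E | (q.1 : E →L[ℝ] E) q.2 ∈ A}) 
        = ν {g : G | (g : E →L[ℝ] E) e₀ ∈ A} := by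
      have : ∀ᵐ x ∂μ, x ∈ Metric.sphere (0 : E) 1 := hμ
      filter_upwards [this] with x hx
      have hx1 : ‖e₀‖ = ‖x‖ := by rw [he₀]; simpa using hx.symm
      let h : G := Unitary.linearIsometryEquiv.symm ((ℝ ∙ (e₀ - x))ᗮ.reflection)
      have hh : (h : E →L[ℝ] E) e₀ = x := Submodule.reflection_sub hx1
      have h3 := measure_preimage_mul_right ν h {g : G | (g : E →L[ℝ] E) e₀ ∈ A}
      rw [← h3]
      congr 1
      ext g
      simp [hh]
    rw [lintegral_congr_ae h2]
    simp [mul_comm]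
  simp only
  rw [mul_assoc, ← key, ← mul_assoc, ENNReal.inv_mul_cancel hν0 (measure_ne_top _ _), one_mul]


/-- Radial projection of the action of a linear equivalence to the unit sphere. -/
noncomputable def sphMap {E : Type*} [NormedAddCommGroup E] [InnerProductSpace ℝ E]
    (B : E ≃ₗ[ℝ] E) (x : Metric.sphere (0 : E) 1) : Metric.sphere (0 : E) 1 :=
  ⟨‖B x‖⁻¹ • B x, by
    have h : B (x : E) ≠ 0 := by
      simpa using ne_zero_of_mem_unit_sphere x
    simp [norm_smul, h]⟩

lemma sphMap_symm {E : Type*} [NormedAddCommGroup E] [InnerProductSpace ℝ E]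
    (B : E ≃ₗ[ℝ] E) (x : Metric.sphere (0 : E) 1) : sphMap B.symm (sphMap B x) = x := by
  have h : B (x : E) ≠ 0 := by
    simpa using ne_zero_of_mem_unit_sphere x
  have h1 : ‖(x : E)‖ = 1 := by simp
  ext1
  simp [sphMap, norm_smul, h, smul_smul, h1]

lemma sphMap_continuous {E : Type*} [NormedAddCommGroup E] [InnerProductSpace ℝ E]
    [FiniteDimensional ℝ E] (B : E ≃ₗ[ℝ] E) : Continuous (sphMap B) := by
  have hB : Continuous B := B.toLinearMap.continuous_of_finiteDimensional
  refine Continuous.subtype_mk ?_ _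
  refine Continuous.smul (Continuous.inv₀ (by fun_prop) ?_) (by fun_prop)
  intro x
  simpa using ne_zero_of_mem_unit_sphere x

/-- The homeomorphism of the sphere induced by a linear equivalence. -/
noncomputable def sphHomeo {E : Type*} [NormedAddCommGroup E] [InnerProductSpace ℝ E]
    [FiniteDimensional ℝ E] (B : E ≃ₗ[ℝ] E) :
    Metric.sphere (0 : E) 1 ≃ₜ Metric.sphere (0 : E) 1 where
  toFun := sphMap B
  invFun := sphMap B.symm
  left_inv := sphMap_symm B
  right_inv := sphMap_symm B.symm
  continuous_toFun := sphMap_continuous B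
  continuous_invFun := sphMap_continuous B.symm

open scoped Pointwise in
lemma aux_slice {E : Type*} [NormedAddCommGroup E] [InnerProductSpace ℝ E]
    (B : E ≃ₗ[ℝ] E) (A : Set (Metric.sphere (0 : E) 1)) (x : Metric.sphere (0 : E) 1)
    (r : ℝ) (hr : 0 < r) :
    B (r • (x : E)) ∈ Set.Ioo (0 : ℝ) 1 • ((↑) '' A : Set E) ↔
      sphMap B x ∈ A ∧ r < ‖B x‖⁻¹ := by
  have h : B (x : E) ≠ 0 := by
    simpa using ne_zero_of_mem_unit_sphere x
  have h' : 0 < ‖B (x : E)‖ := norm_pos_iff.mpr h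
  rw [Set.mem_smul]
  constructor
  · rintro ⟨s, ⟨hs0, hs1⟩, _, ⟨y, hy, rfl⟩, he⟩
    have hn := congrArg norm he
    rw [map_smul] at he
    have hy1 : ‖(y : E)‖ = 1 := by simp
    simp only [map_smul, norm_smul, hy1, Real.norm_eq_abs, abs_of_pos hs0, abs_of_pos hr,
      mul_one] at hn
    constructor
    · have : sphMap B x = y := by
        ext1
        change ‖B x‖⁻¹ • B x = (y : E)
        have h3 : B (x : E) = r⁻¹ • s • (y : E) := by
          rw [he, smul_smul, inv_mul_cancel₀ hr.ne', one_smul]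
        have h4 : ‖B (x : E)‖⁻¹ = r * s⁻¹ := by
          rw [hn]; field_simp
        rw [h4, h3, smul_smul, smul_smul]
        have : r * s⁻¹ * (r⁻¹ * s) = 1 := by field_simp
        rw [← mul_assoc] at this
        rw [this, one_smul]
      rwa [this]
    · rw [lt_inv_comm₀ hr h', ← mul_lt_mul_iff_right₀ hr, ← hn, mul_inv_cancel₀ hr.ne']
      exact hs1
  · rintro ⟨hA, hlt⟩
    refine ⟨r * ‖B x‖, ⟨by positivity, ?_⟩, _, ⟨_, hA, rfl⟩, ?_⟩
    · calc r * ‖B x‖ < ‖B x‖⁻¹ * ‖B x‖ := by gcongr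
        _ = 1 := inv_mul_cancel₀ h'.ne'
    · change (r * ‖B x‖) • (‖B x‖⁻¹ • B x) = _
      rw [smul_smul, mul_assoc, mul_inv_cancel₀ h'.ne', mul_one, map_smul]

open scoped Pointwise in
lemma aux_density {E : Type*} [NormedAddCommGroup E] [InnerProductSpace ℝ E]
    [FiniteDimensional ℝ E] [MeasurableSpace E] [BorelSpace E] [Nontrivial E]
    (B : E ≃ₗ[ℝ] E) :
    Measure.map (sphHomeo B) ((volume : Measure E).toSphere.withDensity
      (fun x => ((Real.toNNReal ((‖B x‖⁻¹) ^ (Module.finrank ℝ E)) : NNReal) : ENNReal))) =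
    ENNReal.ofReal |(LinearMap.det (B : E →ₗ[ℝ] E))⁻¹| • (volume : Measure E).toSphere := by
  have hB : Continuous B := B.toLinearMap.continuous_of_finiteDimensional
  have hpos : 0 < Module.finrank ℝ E := Module.finrank_pos
  ext A hA
  have hA' : MeasurableSet (sphHomeo B ⁻¹' A) := (sphHomeo B).continuous.measurable hA
  rw [Measure.map_apply (sphHomeo B).continuous.measurable hA, withDensity_apply _ hA',
    Measure.smul_apply, smul_eq_mul, Measure.toSphere_apply' _ hA, mul_left_comm,
    ← Measure.addHaar_preimage_linearMap volume (LinearEquiv.isUnit_det' B).ne_zero]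
  set C : Set E := Set.Ioo (0 : ℝ) 1 • ((↑) '' A) with hC
  have hC0 : (⇑(B : E →ₗ[ℝ] E)) ⁻¹' C ⊆ {0}ᶜ := by
    intro x hx h0
    rw [Set.mem_singleton_iff] at h0
    subst h0
    obtain ⟨s, hs, _, ⟨y, hy, rfl⟩, he⟩ := hx
    have : s • (y : E) = 0 := by simpa using he
    rcases smul_eq_zero.mp this with h | h
    · exact hs.1.ne' h
    · exact ne_zero_of_mem_unit_sphere y h
  have hD : volume ((⇑(B : E →ₗ[ℝ] E)) ⁻¹' C) =
      ((volume : Measure E).comap ((↑) : ({0}ᶜ : Set E) → E)) ((↑) ⁻¹' ((⇑(B : E →ₗ[ℝ] E)) ⁻¹' C)) := by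
    rw [comap_subtype_coe_apply (measurableSet_singleton _).compl]
    congr 1
    rw [Subtype.image_preimage_coe, Set.inter_eq_right.mpr hC0]
  have hmp := (volume : Measure E).measurePreserving_homeomorphUnitSphereProd
  let ψ := homeomorphUnitSphereProd E
  have hD2 : (((↑) : ({0}ᶜ : Set E) → E) ⁻¹' ((⇑(B : E →ₗ[ℝ] E)) ⁻¹' C)) =
     ψ ⁻¹' {q | sphMap B q.1 ∈ A ∧ q.2.1 < ‖B q.1‖⁻¹} := by
    ext z
    have := aux_slice B A (ψ z).1 (ψ z).2.1 (ψ z).2.2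
    have hz : (ψ z).2.1 • ((ψ z).1 : E) = z := by
      exact congrArg Subtype.val (ψ.symm_apply_apply z)
    rw [hz] at this
    exact this
  have hms : MeasurableSet {q : Metric.sphere (0 : E) 1 × Set.Ioi (0 : ℝ) | 
      sphMap B q.1 ∈ A ∧ q.2.1 < ‖B q.1‖⁻¹} := by
    refine MeasurableSet.inter (((sphMap_continuous B).measurable.comp measurable_fst) hA) ?_
    refine measurableSet_lt (measurable_subtype_coe.comp measurable_snd) ?_
    exact Measurable.inv ((hB.comp continuous_subtype_val).norm.measurable.comp measurable_fst)
  rw [hD, hD2, hmp.measure_preimage_emb (Homeomorph.measurableEmbedding _),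
    Measure.prod_apply hms, ← lintegral_const_mul' _ _ (by simp), ← lintegral_indicator hA']
  refine lintegral_congr fun x => ?_
  have hx : B (x : E) ≠ 0 := by
    simpa using ne_zero_of_mem_unit_sphere x
  by_cases hxA : sphMap B x ∈ A
  · have h1 : x ∈ sphHomeo B ⁻¹' A := hxA
    rw [Set.indicator_of_mem h1]
    have h2 : (Prod.mk x ⁻¹' {q : Metric.sphere (0 : E) 1 × Set.Ioi (0 : ℝ) | 
      sphMap B q.1 ∈ A ∧ q.2.1 < ‖B q.1‖⁻¹}) = Set.Iio ⟨‖B x‖⁻¹, by simpa using hx⟩ := by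
      ext r
      simp [hxA, ← Subtype.coe_lt_coe]
    rw [h2, Measure.volumeIoiPow_apply_Iio, Nat.sub_add_cancel hpos, Nat.cast_pred hpos,
      sub_add_cancel, ← ENNReal.ofReal_natCast, ← ENNReal.ofReal_mul (by positivity),
      mul_div_cancel₀ _ (by positivity)]
    rfl
  · have h1 : x ∉ sphHomeo B ⁻¹' A := hxA
    rw [Set.indicator_of_notMem h1]
    have h2 : (Prod.mk x ⁻¹' {q : Metric.sphere (0 : E) 1 × Set.Ioi (0 : ℝ) | 
      sphMap B q.1 ∈ A ∧ q.2.1 < ‖B q.1‖⁻¹}) = ∅ := by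
      ext r
      simp [hxA]
    rw [h2]
    simp

lemma aux_toSphere {E : Type*} [NormedAddCommGroup E] [InnerProductSpace ℝ E]
    [FiniteDimensional ℝ E] [MeasurableSpace E] [BorelSpace E] [Nontrivial E]
    (B : E ≃ₗ[ℝ] E) (h : E → ℝ) 
    (hh : ∀ r : ℝ, 0 < r → ∀ x, h (r • x) = (r⁻¹) ^ (Module.finrank ℝ E) * h x) :
    ∫ x : Metric.sphere (0 : E) 1, h (B x) ∂(volume : Measure E).toSphere =
    |LinearMap.det (B : E →ₗ[ℝ] E)|⁻¹ * 
      ∫ x : Metric.sphere (0 : E) 1, h x ∂(volume : Measure E).toSphere := by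
  have hB : Continuous B := B.toLinearMap.continuous_of_finiteDimensional
  have h1 := congrArg (fun μ => ∫ x : Metric.sphere (0 : E) 1, h x ∂μ) (aux_density B)
  rw [(Homeomorph.measurableEmbedding _).integral_map, integral_withDensity_eq_integral_smul,
    integral_smul_measure, ENNReal.toReal_ofReal (abs_nonneg _), abs_inv, smul_eq_mul] at h1
  · rw [← h1]
    refine integral_congr_ae (Filter.Eventually.of_forall fun x => ?_)
    have hx : B (x : E) ≠ 0 := by
      simpa using ne_zero_of_mem_unit_sphere x
    have hx' : 0 < ‖B (x : E)‖ := norm_pos_iff.mpr hx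
    change _ = (Real.toNNReal _) • h (‖B x‖⁻¹ • B x)
    rw [hh _ (inv_pos.mpr hx'), NNReal.smul_def, Real.coe_toNNReal _ (by positivity), smul_eq_mul,
      ← mul_assoc, ← mul_pow, inv_inv, inv_mul_cancel₀ hx'.ne', one_pow, one_mul]
  · exact Measurable.real_toNNReal (Continuous.measurable (by
      refine Continuous.pow (Continuous.inv₀ (by fun_prop) ?_) _
      intro x
      simpa using ne_zero_of_mem_unit_sphere x))

open scoped Pointwise in
lemma aux_toSphere_inv {E : Type*} [NormedAddCommGroup E] [InnerProductSpace ℝ E]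
    [FiniteDimensional ℝ E] [MeasurableSpace E] [BorelSpace E] (e : E ≃ₗᵢ[ℝ] E) :
    MeasurePreserving e (Measure.map ((↑) : Metric.sphere (0 : E) 1 → E) (volume : Measure E).toSphere)
      (Measure.map ((↑) : Metric.sphere (0 : E) 1 → E) (volume : Measure E).toSphere) := by
  refine ⟨e.continuous.measurable, ?_⟩
  ext A hA
  have hA' := e.continuous.measurable hA
  rw [Measure.map_apply e.continuous.measurable hA, Measure.map_apply measurable_subtype_coe hA',
    Measure.map_apply measurable_subtype_coe hA,
    Measure.toSphere_apply' _ (measurable_subtype_coe hA'),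
    Measure.toSphere_apply' _ (measurable_subtype_coe hA)]
  congr 1
  rw [← e.measurePreserving.measure_preimage_emb e.toHomeomorph.measurableEmbedding
    (Set.Ioo (0 : ℝ) 1 • (((↑) : Metric.sphere (0 : E) 1 → E) '' (((↑) : Metric.sphere (0 : E) 1 → E) ⁻¹' A)))]
  congr 1
  ext x
  simp only [Set.mem_preimage, Set.mem_smul]
  constructor
  · rintro ⟨s, hs, _, ⟨y, hy, rfl⟩, rfl⟩
    exact ⟨s, hs, e y, ⟨⟨e y, by simp⟩, hy, rfl⟩, by simp⟩
  · rintro ⟨s, hs, _, ⟨y, hy, rfl⟩, he⟩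
    refine ⟨s, hs, e.symm y, ⟨⟨e.symm y, by simp⟩, by simpa using hy, rfl⟩, ?_⟩
    apply e.injective
    simpa using he

lemma aux_hausdorff {E : Type*} [NormedAddCommGroup E] [InnerProductSpace ℝ E]
    [FiniteDimensional ℝ E] [MeasurableSpace E] [BorelSpace E] (m : ℕ)
    (hE : Module.finrank ℝ E = m + 1) (B : E ≃ₗ[ℝ] E) (h : E → ℝ)
    (hh : ∀ r : ℝ, 0 < r → ∀ x, h (r • x) = (r⁻¹) ^ (m + 1) * h x) :
    ∫ x in Metric.sphere (0 : E) 1, h (B x) ∂μH[(m : ℝ)] =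
    |LinearMap.det (B : E →ₗ[ℝ] E)|⁻¹ *
      ∫ x in Metric.sphere (0 : E) 1, h x ∂μH[(m : ℝ)] := by
  have : Nontrivial E := Module.nontrivial_of_finrank_pos (R := ℝ) (by omega)
  have hS : MeasurableSet (Metric.sphere (0 : E) 1) := Metric.isClosed_sphere.measurableSet
  obtain ⟨κ, hκ⟩ := aux_unique (E := E)
  set μ : Measure E := μH[(m : ℝ)].restrict (Metric.sphere (0 : E) 1) with hμ
  set σ : Measure E := Measure.map ((↑) : Metric.sphere (0 : E) 1 → E) (volume : Measure E).toSphere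
    with hσ
  have hμf : IsFiniteMeasure μ := ⟨by
    rw [hμ, Measure.restrict_apply_univ]
    exact aux_sphere_finite m hE⟩
  have hσf : IsFiniteMeasure σ := by rw [hσ]; infer_instance
  have hσ0 : σ Set.univ ≠ 0 := by
    rw [hσ, Measure.map_apply measurable_subtype_coe MeasurableSet.univ, Set.preimage_univ]
    exact fun h0 => (volume : Measure E).toSphere_ne_zero (Measure.measure_univ_eq_zero.mp h0)
  have h1 := hκ μ (by rw [hμ, Measure.restrict_apply hS.compl]; simp) (by
    intro e
    have := (e.toIsometryEquiv.measurePreserving_hausdorffMeasure (m : ℝ)).restrict_preimage hS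
    have hpre : e.toIsometryEquiv ⁻¹' (Metric.sphere (0 : E) 1) = Metric.sphere (0 : E) 1 := by
      ext x
      simp
    rw [hpre] at this
    exact this)
  have h2 := hκ σ (by
    rw [hσ, Measure.map_apply measurable_subtype_coe hS.compl]
    convert measure_empty (μ := (volume : Measure E).toSphere)
    ext x
    simp) aux_toSphere_inv
  have h3 : μ = (μ Set.univ / σ Set.univ) • σ := by
    ext A hA
    rw [Measure.smul_apply, smul_eq_mul, h1 A hA, h2 A hA, mul_comm (κ A) (σ _), ← mul_assoc,
      ENNReal.div_mul_cancel hσ0 (measure_ne_top _ _), mul_comm]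
  rw [h3, integral_smul_measure, integral_smul_measure, hσ,
    (MeasurableEmbedding.subtype_coe hS).integral_map,
    (MeasurableEmbedding.subtype_coe hS).integral_map, aux_toSphere B h (by rw [hE]; exact hh)]
  simp only [smul_eq_mul]
  ring

/-- The linear map `(t,x) ↦ (λt, t a⃗ + Bx)`. -/
noncomputable def sglMap {E : Type*} [NormedAddCommGroup E] [InnerProductSpace ℝ E]
    (lam : ℝ) (av : E) (B : E ≃ₗ[ℝ] E) : (ℝ × E) →ₗ[ℝ] (ℝ × E) where
  toFun z := (lam * z.1, z.1 • av + B z.2)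
  map_add' x y := by
    ext1
    · simp [mul_add]
    · simp [add_smul]; abel
  map_smul' c x := by
    ext1
    · simp; ring
    · simp [mul_smul]

lemma sglMap_det {E : Type*} [NormedAddCommGroup E] [InnerProductSpace ℝ E]
    [FiniteDimensional ℝ E] (lam : ℝ) (hlam : 0 < lam) (av : E) (B : E ≃ₗ[ℝ] E) :
    LinearMap.det (sglMap lam av B) = lam * LinearMap.det (B : E →ₗ[ℝ] E) := by
  have : sglMap lam av B =
      (LinearMap.transvection (lam⁻¹ • LinearMap.fst ℝ ℝ E) ((0 : ℝ), av)) ∘ₗ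
        (LinearMap.prodMap (lam • LinearMap.id) (B : E →ₗ[ℝ] E)) := by
    refine LinearMap.ext fun z => ?_
    ext1
    · simp [sglMap, LinearMap.transvection.apply]
    · simp [sglMap, LinearMap.transvection.apply, hlam.ne', add_comm]
  rw [this, LinearMap.det_comp, LinearMap.transvection.det, LinearMap.det_prodMap,
    LinearMap.det_smul]
  simp

lemma aux_half {n : ℕ} (p : ℝ) 
    (f : ℝ × EuclideanSpace ℝ (Fin (n - 1)) → ℝ) (hf : Differentiable ℝ f)
    (lam : ℝ) (hlam : 0 < lam) (av : EuclideanSpace ℝ (Fin (n - 1)))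
    (B : EuclideanSpace ℝ (Fin (n - 1)) ≃ₗ[ℝ] EuclideanSpace ℝ (Fin (n - 1)))
    (w : ℝ × EuclideanSpace ℝ (Fin (n - 1))) :
    ∫ z in upperHalfP n, |fderiv ℝ (fun z => f (lam * z.1, z.1 • av + B z.2)) z w| ^ p =
      (lam * |LinearMap.det (B : EuclideanSpace ℝ (Fin (n - 1)) →ₗ[ℝ] EuclideanSpace ℝ (Fin (n - 1)))|)⁻¹ *
      ∫ z in upperHalfP n, |fderiv ℝ f z (lam * w.1, w.1 • av + B w.2)| ^ p := by
  set L := sglMap lam av B with hL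
  have hdet := sglMap_det lam hlam av B
  have hdB : LinearMap.det (B : EuclideanSpace ℝ (Fin (n - 1)) →ₗ[ℝ] EuclideanSpace ℝ (Fin (n - 1))) ≠ 0 :=
    (LinearEquiv.isUnit_det' B).ne_zero
  have hdL : LinearMap.det L ≠ 0 := by
    rw [hL, hdet]; exact mul_ne_zero hlam.ne' hdB
  have hfd : ∀ z, fderiv ℝ (fun z => f (lam * z.1, z.1 • av + B z.2)) z w = fderiv ℝ f (L z) (L w) := by
    intro z
    have h1 : (fun z : ℝ × EuclideanSpace ℝ (Fin (n - 1)) => f (lam * z.1, z.1 • av + B z.2)) =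
      f ∘ (LinearMap.toContinuousLinearMap L) := rfl
    have h2 := ((hf (L z)).hasFDerivAt.comp z 
      (LinearMap.toContinuousLinearMap L).hasFDerivAt).fderiv
    rw [h1]
    erw [h2]
    rfl
  simp_rw [hfd]
  have hpre : upperHalfP n = L ⁻¹' (upperHalfP n) := by
    ext z
    change 0 ≤ z.1 ↔ 0 ≤ lam * z.1
    exact (mul_nonneg_iff_of_pos_left hlam).symm
  have hHaar : Measure.IsAddHaarMeasure
      (volume : Measure (ℝ × EuclideanSpace ℝ (Fin (n - 1)))) := by
    rw [Measure.volume_eq_prod]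
    exact Measure.prod.instIsAddHaarMeasure _ _
  have hmap := Measure.map_linearMap_addHaar_eq_smul_addHaar
    (volume : Measure (ℝ × EuclideanSpace ℝ (Fin (n - 1)))) hdL
  have hemb : MeasurableEmbedding L :=
    ((LinearMap.equivOfDetNeZero L hdL).toContinuousLinearEquiv.toHomeomorph).measurableEmbedding
  have h3 := hemb.setIntegral_map (μ := volume) 
    (fun z => |fderiv ℝ f z (L w)| ^ p) (upperHalfP n)
  rw [← hpre, hmap, Measure.restrict_smul, integral_smul_measure] at h3
  rw [← h3, ENNReal.toReal_ofReal (abs_nonneg _), hL, hdet, abs_inv, abs_mul, abs_of_pos hlam]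
  rfl

lemma omegaBall_pos (s : ℝ) (hs : 0 ≤ s) : 0 < omegaBall s := by
  unfold omegaBall
  have := Real.Gamma_pos_of_pos (s := 1 + s / 2) (by linarith)
  positivity

lemma cNP_nonneg (m : ℕ) (p : ℝ) (hp : 1 < p) : 0 ≤ cNP (m + 1) p := by
  unfold cNP
  have h0 : (0 : ℝ) ≤ m := Nat.cast_nonneg m
  have h1 := omegaBall_pos ((m + 1 : ℕ) : ℝ) (by positivity)
  have h2 := omegaBall_pos (p - 1) (by linarith)
  have h3 := omegaBall_pos (((m + 1 : ℕ) : ℝ) + p - 2) (by push_cast; linarith)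
  positivity

lemma cNPA_nonneg (n : ℕ) (p a : ℝ) (hn : 2 ≤ n) (hp : 1 < p) (ha : (n : ℝ) ≤ a) :
    0 ≤ cNPA n p a := by
  have h0 : (2 : ℝ) ≤ n := by exact_mod_cast hn
  unfold cNPA
  have h1 : 0 ≤ p * (a - 1) / ((p - 1) * ((n : ℝ) - 1)) :=
    div_nonneg (mul_nonneg (by linarith) (by linarith)) (mul_nonneg (by linarith) (by linarith))
  have h2 : 0 ≤ ((p - 1) * ((n : ℝ) - 1)) / (p * (a - (n : ℝ)) + (n : ℝ) - 1) := by
    have : 0 ≤ p * (a - (n : ℝ)) := mul_nonneg (by linarith) (by linarith)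
    exact div_nonneg (mul_nonneg (by linarith) (by linarith)) (by linarith)
  positivity

lemma affE_nonneg (n : ℕ) (p : ℝ) (hn : 2 ≤ n) (hp : 1 < p)
    (f : ℝ × EuclideanSpace ℝ (Fin (n - 1)) → ℝ) : 0 ≤ affE n p f := by
  obtain ⟨m, rfl⟩ : ∃ m, n = m + 2 := ⟨n - 2, by omega⟩
  refine mul_nonneg (cNP_nonneg m p hp) (Real.rpow_nonneg ?_ _)
  refine integral_nonneg fun ξ => Real.rpow_nonneg (integral_nonneg fun z => ?_) _
  positivity

lemma affE_transform {n : ℕ} (hn : 2 ≤ n) (p : ℝ) (hp1 : 1 < p) 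
    (f : ℝ × EuclideanSpace ℝ (Fin (n - 1)) → ℝ) (hf : Differentiable ℝ f)
    (lam : ℝ) (hlam : 0 < lam) (av : EuclideanSpace ℝ (Fin (n - 1)))
    (B : EuclideanSpace ℝ (Fin (n - 1)) ≃ₗ[ℝ] EuclideanSpace ℝ (Fin (n - 1))) (d : ℝ)
    (hd : d = |LinearMap.det (B : EuclideanSpace ℝ (Fin (n - 1)) →ₗ[ℝ] EuclideanSpace ℝ (Fin (n - 1)))|)
    (hd0 : 0 < d) :
    affE n p (fun z => f (lam * z.1, z.1 • av + B z.2)) =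
      d ^ (-(1 / p) + 1 / ((n : ℝ) - 1)) * lam ^ (-(1 / p)) * affE n p f := by
  obtain ⟨m, rfl⟩ : ∃ m, n = m + 2 := ⟨n - 2, by omega⟩
  have hm : ((m + 2 : ℕ) : ℝ) - 2 = m := by push_cast; ring
  have hm1 : ((m + 2 : ℕ) : ℝ) - 1 = m + 1 := by push_cast; ring
  have hm0 : (0 : ℝ) ≤ m := Nat.cast_nonneg m
  have hp0 : p ≠ 0 := by linarith
  unfold affE
  simp only [aux_half p f hf lam hlam av B, ← hd, mul_zero, zero_smul, zero_add]
  rw [hm, hm1]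
  set F : EuclideanSpace ℝ (Fin (m + 2 - 1)) → ℝ := fun x => 
    (∫ z in upperHalfP (m + 2), |fderiv ℝ f z (0, x)| ^ p) ^ (-(((m : ℝ) + 1) / p)) with hF
  have hI0 : ∀ x, 0 ≤ ∫ z in upperHalfP (m + 2), |fderiv ℝ f z (0, x)| ^ p := 
    fun x => integral_nonneg fun z => by positivity
  have hF0 : ∀ x, 0 ≤ F x := fun x => Real.rpow_nonneg (hI0 x) _
  have hhom : ∀ r : ℝ, 0 < r → ∀ x, F (r • x) = (r⁻¹) ^ (m + 1) * F x := by
    intro r hr x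
    have h1 : ∀ z, |fderiv ℝ f z (0, r • x)| ^ p = r ^ p * |fderiv ℝ f z (0, x)| ^ p := by
      intro z
      have : ((0 : ℝ), r • x) = r • ((0 : ℝ), x) := by simp
      rw [this, map_smul, smul_eq_mul, abs_mul, abs_of_pos hr, 
        Real.mul_rpow hr.le (abs_nonneg _)]
    simp only [hF, h1]
    rw [integral_const_mul, Real.mul_rpow (by positivity) (hI0 x), ← Real.rpow_mul hr.le,
      inv_pow, ← Real.rpow_natCast r, ← Real.rpow_neg hr.le]
    congr 2
    push_cast
    field_simp
  have hE : Module.finrank ℝ (EuclideanSpace ℝ (Fin (m + 2 - 1))) = m + 1 := by simp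
  have hH := aux_hausdorff m hE B F hhom
  rw [← hd] at hH
  have hre : ∀ x, ((lam * d)⁻¹ * ∫ z in upperHalfP (m + 2), |fderiv ℝ f z (0, B x)| ^ p) ^ 
      (-(((m : ℝ) + 1) / p)) = (lam * d) ^ (((m : ℝ) + 1) / p) * F (B x) := by
    intro x
    rw [Real.mul_rpow (by positivity) (hI0 _), Real.inv_rpow (by positivity), 
      Real.rpow_neg (by positivity), inv_inv]
  simp only [hre]
  rw [integral_const_mul, hH]
  have hint : 0 ≤ ∫ x in Metric.sphere (0 : EuclideanSpace ℝ (Fin (m + 2 - 1))) 1, F x ∂μH[(m : ℝ)] :=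
    integral_nonneg hF0
  rw [Real.mul_rpow (by positivity) (by positivity), Real.mul_rpow (by positivity) hint,
    ← Real.rpow_mul (by positivity), Real.mul_rpow hlam.le hd0.le, Real.inv_rpow hd0.le,
    Real.rpow_neg hd0.le (1 / _), inv_inv, Real.rpow_add hd0]
  have hex : ((m : ℝ) + 1) / p * -(1 / ((m : ℝ) + 1)) = -(1 / p) := by field_simp
  rw [hex]
  ring

/-- Transformation of the affine energy `𝒜_p` and of the boundary norm under the action
`g(t,x) = f(λt, a⃗ t + Bx)` of `SGL_{n,+}`. -/
theorem affA_transform {n : ℕ} (hn : 2 ≤ n) (p a : ℝ) (hp1 : 1 < p) (hpn : p < n)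
    (ha : (n : ℝ) ≤ a)
    (f : ℝ × EuclideanSpace ℝ (Fin (n - 1)) → ℝ) (hf : Differentiable ℝ f)
    (lam : ℝ) (hlam : 0 < lam) (av : EuclideanSpace ℝ (Fin (n - 1)))
    (B : EuclideanSpace ℝ (Fin (n - 1)) ≃ₗ[ℝ] EuclideanSpace ℝ (Fin (n - 1))) :
    affA n p a (fun z => f (lam * z.1, z.1 • av + B z.2)) =
      |LinearMap.det (B : EuclideanSpace ℝ (Fin (n - 1)) →ₗ[ℝ] EuclideanSpace ℝ (Fin (n - 1)))| ^
          (-((a - p) / (p * (a - 1)))) *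
        lam ^ ((p - 1) * (a - (n : ℝ)) / (p * (a - 1))) * affA n p a f ∧
    ∫ x : EuclideanSpace ℝ (Fin (n - 1)),
        |f (lam * (0 : ℝ), (0 : ℝ) • av + B x)| ^ (p * (a - 1) / (a - p)) =
      |LinearMap.det (B : EuclideanSpace ℝ (Fin (n - 1)) →ₗ[ℝ] EuclideanSpace ℝ (Fin (n - 1)))|⁻¹ *
        ∫ x : EuclideanSpace ℝ (Fin (n - 1)), |f ((0 : ℝ), x)| ^ (p * (a - 1) / (a - p)) := by
  have hn' : (2 : ℝ) ≤ n := by exact_mod_cast hn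
  have hdB : LinearMap.det (B : EuclideanSpace ℝ (Fin (n - 1)) →ₗ[ℝ] EuclideanSpace ℝ (Fin (n - 1))) ≠ 0 :=
    (LinearEquiv.isUnit_det' B).ne_zero
  have hp0 : 0 < p := by linarith
  have ha1 : 0 < a - 1 := by linarith
  constructor
  · obtain ⟨d, hd⟩ : ∃ d, d = |LinearMap.det (B : EuclideanSpace ℝ (Fin (n - 1)) →ₗ[ℝ] EuclideanSpace ℝ (Fin (n - 1)))| := ⟨_, rfl⟩
    have hd0 : 0 < d := by rw [hd]; exact abs_pos.mpr hdB
    unfold affA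
    rw [affE_transform hn p hp1 f hf lam hlam av B d hd hd0]
    simp only [aux_half p f hf lam hlam av B, ← hd]
    set q : ℝ := (1 / p) * (1 + (p - 1) * (a - (n : ℝ)) / (a - 1)) with hq
    set e : ℝ := p - 1 - (p - 1) * (a - (n : ℝ)) / (a - 1) with he
    set J : EuclideanSpace ℝ (Fin (n - 1)) → ℝ := fun v =>
      (∫ z in upperHalfP n, |fderiv ℝ f z (1, v)| ^ p) with hJ
    have hJ0 : ∀ v, 0 ≤ J v := fun v => integral_nonneg fun z => by positivity
    have hJs : ∀ v, ((lam * d)⁻¹ * ∫ z in upperHalfP n, 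
        |fderiv ℝ f z (lam * 1, (1 : ℝ) • av + B v)| ^ p) ^ q =
        (d ^ (-q) * lam ^ ((p - 1) * q)) * J (lam⁻¹ • (av + B v)) ^ q := by
      intro v
      have h1 : ∀ z, |fderiv ℝ f z (lam * 1, (1 : ℝ) • av + B v)| ^ p =
          lam ^ p * |fderiv ℝ f z (1, lam⁻¹ • (av + B v))| ^ p := by
        intro z
        have : (lam * 1, (1 : ℝ) • av + B v) = lam • ((1 : ℝ), lam⁻¹ • (av + B v)) := by
          rw [Prod.smul_mk, smul_smul, mul_inv_cancel₀ hlam.ne', one_smul, one_smul, smul_eq_mul]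
        rw [this, map_smul, smul_eq_mul, abs_mul, abs_of_pos hlam, 
          Real.mul_rpow hlam.le (abs_nonneg _)]
      simp only [h1]
      rw [integral_const_mul, ← mul_assoc, Real.mul_rpow (by positivity) (hJ0 _)]
      congr 1
      have : (lam * d)⁻¹ * lam ^ p = d⁻¹ * lam ^ (p - 1) := by
        rw [Real.rpow_sub hlam, Real.rpow_one]; field_simp
      rw [this, Real.mul_rpow (by positivity) (by positivity), Real.inv_rpow hd0.le,
        Real.rpow_neg hd0.le, Real.rpow_mul hlam.le]
    simp only [hJs]
    rw [← Real.mul_iInf_of_nonneg (by positivity)]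
    have hsurj : Function.Surjective (fun v => lam⁻¹ • (av + B v)) := by
      intro y
      refine ⟨B.symm (lam • y - av), ?_⟩
      simp [smul_smul, hlam.ne']
    rw [hsurj.iInf_comp (g := fun v => J v ^ q)]
    have hE0 := affE_nonneg n p hn hp1 f
    have hI0 : 0 ≤ ⨅ v, J v ^ q := Real.iInf_nonneg fun v => Real.rpow_nonneg (hJ0 v) _
    have hc0 := cNPA_nonneg n p a hn hp1 ha
    rw [Real.mul_rpow (z := e) (by positivity) hE0,
      Real.mul_rpow (x := d ^ _) (z := e) (by positivity) (by positivity),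
      ← Real.rpow_mul hd0.le, ← Real.rpow_mul hlam.le]
    set X := affE n p f ^ e
    have hX : 0 ≤ X := Real.rpow_nonneg hE0 _
    set Y := ⨅ v, J v ^ q
    have hre : cNPA n p a ^ p * (d ^ ((-(1 / p) + 1 / ((n : ℝ) - 1)) * e) * lam ^ (-(1 / p) * e) * X) *
        (d ^ (-q) * lam ^ ((p - 1) * q) * Y) =
        (d ^ (-((a - p) / (a - 1))) * lam ^ ((p - 1) * (a - n) / (a - 1))) *
          (cNPA n p a ^ p * X * Y) := by
      have hn1 : (n : ℝ) - 1 ≠ 0 := by linarith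
      have e1 : -((a - p) / (a - 1)) = (-(1 / p) + 1 / ((n : ℝ) - 1)) * e + -q := by
        rw [he, hq]; field_simp; ring
      have e2 : (p - 1) * (a - n) / (a - 1) = -(1 / p) * e + (p - 1) * q := by
        rw [he, hq]; field_simp; ring
      rw [e1, e2, Real.rpow_add hd0, Real.rpow_add hlam]
      ring
    rw [hre, Real.mul_rpow (by positivity) (by positivity), 
      Real.mul_rpow (by positivity) (by positivity), ← Real.rpow_mul hd0.le, 
      ← Real.rpow_mul hlam.le]
    congr 3
    · field_simp
    · field_simp
  · simp only [mul_zero, zero_smul, zero_add]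
    have hemb : MeasurableEmbedding B :=
      (B.toContinuousLinearEquiv.toHomeomorph).measurableEmbedding
    have hmap := Measure.map_linearMap_addHaar_eq_smul_addHaar
      (volume : Measure (EuclideanSpace ℝ (Fin (n - 1)))) hdB
    have h3 := hemb.integral_map (μ := volume) (fun x => |f ((0 : ℝ), x)| ^ (p * (a - 1) / (a - p)))
    have hmap' : Measure.map B (volume : Measure (EuclideanSpace ℝ (Fin (n - 1)))) = _ := hmap
    rw [hmap', integral_smul_measure, ENNReal.toReal_ofReal (abs_nonneg _), abs_inv, smul_eq_mul] at h3
    exact h3.symm
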